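/- Let I be the square-free Veronese ideal of degree d in the variables x_1, ..., x_n of R = K[x_1, ..., x_n]. Then ara I = q(I) + 1 = n − d + 1. -/

import Mathlib

/-!
Write `I` for the square-free Veronese ideal of degree `d` and `e_k` for the elementary symmetric
polynomials.

*Arithmetical rank, upper bound.* The `n - d + 1` polynomials `e_d, …, e_n` generate `I` up to
radical. Given a prime `P` containing all of them, let `N` be the set of indices `i` with `X i ∉ P`.
Every square-free monomial of degree `|N|` other than `∏_{i ∈ N} X i` lies in `P`, hence `e_{|N|}`
is congruent to `∏_{i ∈ N} X i ∉ P` modulo `P`. So `|N| < d`, every `d`-subset meets the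
complement of `N`, and `I ≤ P` (`sqVeronese_le_of_isPrime`).

*Arithmetical rank, lower bound.* For `|A| = n - d + 1`, the prime generated by the variables
in `A` is a minimal prime of `I` (`coordPrime_mem_minimalPrimes`) of height at least `|A|`
(`card_le_height_coordPrime`). By Krull's height theorem, no fewer than `n - d + 1` elements can
generate `I` up to radical.

*Linear quotient index.* A variable in the `j`-th colon ideal is not in the support `u j`, so
`|V j| ≤ n - d` (`disjoint_of_witness`). For the last generator `u j`, each variable `X i` with
`i ∉ u j` lies in the colon ideal, because exchanging some `a ∈ u j` for `i` gives an earlier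
generator; so the bound is attained (`mem_of_witness_last`).
-/

open MvPolynomial

/-- The square-free monomial `∏ i in S, X i`. -/
noncomputable def sqMon {n : ℕ} (K : Type*) [Field K] (S : Finset (Fin n)) :
    MvPolynomial (Fin n) K := ∏ i ∈ S, X i

/-- The basis-exchange property for a family of supports. -/
def ExchangeProp {n : ℕ} (B : Finset (Finset (Fin n))) : Prop :=
  ∀ u ∈ B, ∀ v ∈ B, ∀ i ∈ u, i ∉ v → ∃ j ∈ v, j ∉ u ∧ insert j (u.erase i) ∈ B

/-- `I` is a matroidal ideal of degree `d`, whose minimal monomial generators are the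
square-free monomials with supports in `B`. -/
def IsMatroidal {n : ℕ} (K : Type*) [Field K] (I : Ideal (MvPolynomial (Fin n) K))
    (B : Finset (Finset (Fin n))) (d : ℕ) : Prop :=
  B.Nonempty ∧ (∀ S ∈ B, S.card = d) ∧ ExchangeProp B ∧
    I = Ideal.span (sqMon K '' (B : Set (Finset (Fin n))))

/-- `supp(I) = {x_1, …, x_n}` for a matroidal ideal with generating supports `B`. -/
def FullSupport {n : ℕ} (B : Finset (Finset (Fin n))) : Prop :=
  ∀ i : Fin n, ∃ S ∈ B, i ∈ S

/-- The height of an ideal: the infimum of the heights of the primes containing it. -/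
noncomputable def idealHeight {A : Type*} [CommRing A] (I : Ideal A) : ℕ∞ :=
  ⨅ (p : PrimeSpectrum A) (_ : I ≤ p.asIdeal), Order.height p

/-- The `J`-depth of the ring `A`: the supremum of the lengths of regular sequences
contained in `J`. -/
noncomputable def ringDepth (A : Type*) [CommRing A] (J : Ideal A) : ℕ∞ :=
  ⨆ (rs : {l : List A // (∀ r ∈ l, r ∈ J) ∧ RingTheory.Sequence.IsRegular A l}),
    (rs.1.length : ℕ∞)

/-- A commutative ring is Cohen–Macaulay if at every maximal ideal the depth of the
localization equals its Krull dimension. -/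
def IsCohenMacaulayRing (A : Type*) [CommRing A] : Prop :=
  ∀ (p : Ideal A) (hp : p.IsMaximal),
    letI : p.IsPrime := hp.isPrime
    (ringDepth (Localization.AtPrime p)
        (IsLocalRing.maximalIdeal (Localization.AtPrime p)) : WithBot ℕ∞)
      = ringKrullDim (Localization.AtPrime p)

/-- The arithmetical rank of an ideal. -/
noncomputable def araIdeal {A : Type*} [CommRing A] (I : Ideal A) : ℕ :=
  sInf {m : ℕ | ∃ f : Fin m → A, (Ideal.span (Set.range f)).radical = I.radical}

/-- An ideal is unmixed if all of its associated primes have the same height. -/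
def IsUnmixed {A : Type*} [CommRing A] (I : Ideal A) : Prop :=
  ∀ p ∈ associatedPrimes A (A ⧸ I), ∀ q ∈ associatedPrimes A (A ⧸ I),
    idealHeight p = idealHeight q

/-- The square-free Veronese ideal of degree `d` in all the variables. -/
noncomputable def sqVeronese {n : ℕ} (K : Type*) [Field K] (d : ℕ) :
    Ideal (MvPolynomial (Fin n) K) :=
  Ideal.span (sqMon K '' {S : Finset (Fin n) | S.card = d})

/-- The ordering `u` of the generating supports, together with the variable sets `V`,
witnesses that the square-free monomial ideal generated by `sqMon K ∘ u` has linear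
quotients: each colon ideal `⟨u_0, …, u_{j-1}⟩ : u_j` is generated by the variables in
`V j`. -/
def LinearQuotientWitness {n s : ℕ} (K : Type*) [Field K]
    (u : Fin s → Finset (Fin n)) (V : Fin s → Finset (Fin n)) : Prop :=
  ∀ j : Fin s,
    (Ideal.span (sqMon K '' (u '' {k | k < j}))).colon (Ideal.span {sqMon K (u j)})
      = Ideal.span ((fun i => (X i : MvPolynomial (Fin n) K)) '' (V j : Set (Fin n)))

/-- The linear quotient index `q(I)` attached to a linear quotient witness:
the maximum, over `j ≥ 1`, of the number of variables generating the `j`-th colon ideal. -/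
def lqIndex {n s : ℕ} (V : Fin s → Finset (Fin n)) : ℕ :=
  (Finset.univ.filter fun j : Fin s => (j : ℕ) ≠ 0).sup fun j => (V j).card

open CategoryTheory in
/-- The module `M` has projective dimension at most `k`. -/
def HasProjDimLE {A : Type*} [CommRing A] (M : ModuleCat A) (k : ℕ) : Prop :=
  ∃ P : ProjectiveResolution M, ∀ i : ℕ, k < i → Limits.IsZero (P.complex.X i)

/-- The ideal generated by the variables `X i`, `i ∈ A`. -/
noncomputable def varIdeal {n : ℕ} (K : Type*) [Field K] (A : Finset (Fin n)) :
    Ideal (MvPolynomial (Fin n) K) :=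
  Ideal.span ((fun i => (X i : MvPolynomial (Fin n) K)) '' (A : Set (Fin n)))

section Veronese

variable {K : Type*} [Field K] {n : ℕ}

lemma sqMon_mem_of_isPrime {P : Ideal (MvPolynomial (Fin n) K)} (S : Finset (Fin n)) {i : Fin n}
    (hi : i ∈ S) (h : X i ∈ P) : sqMon K S ∈ P :=
  P.mem_of_dvd (Finset.dvd_prod_of_mem _ hi) h

lemma exists_mem_of_sqMon_mem {P : Ideal (MvPolynomial (Fin n) K)} (hP : P.IsPrime)
    {S : Finset (Fin n)} (h : sqMon K S ∈ P) : ∃ i ∈ S, X i ∈ P :=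
  (hP.prod_mem_iff).1 h

lemma sqMon_mem_sqVeronese {d : ℕ} {S : Finset (Fin n)} (h : d ≤ S.card) :
    sqMon K S ∈ sqVeronese (n := n) K d := by
  obtain ⟨T, hT, rfl⟩ := Finset.exists_subset_card_eq h
  exact Ideal.mem_of_dvd _ (Finset.prod_dvd_prod_of_subset _ _ _ hT)
    (Ideal.subset_span ⟨T, rfl, rfl⟩)

lemma esymm_mem_sqVeronese {d k : ℕ} (h : d ≤ k) :
    esymm (Fin n) K k ∈ sqVeronese (n := n) K d := by
  refine Ideal.sum_mem _ fun S hS => ?_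
  exact sqMon_mem_sqVeronese (by rw [(Finset.mem_powersetCard.1 hS).2]; exact h)

/-- A prime containing `e_d, …, e_n` contains the square-free Veronese ideal of degree `d`. -/
lemma sqVeronese_le_of_isPrime {d : ℕ} {P : Ideal (MvPolynomial (Fin n) K)} (hP : P.IsPrime)
    (h : ∀ k, d ≤ k → k ≤ n → esymm (Fin n) K k ∈ P) : sqVeronese K d ≤ P := by
  classical
  let N : Finset (Fin n) := Finset.univ.filter fun i => X i ∉ P
  have hN : N.card < d := by
    by_contra! hc
    have h1 := h N.card hc (by simpa using N.card_le_univ)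
    have hmem : N ∈ Finset.powersetCard N.card Finset.univ := by simp
    rw [esymm, ← Finset.add_sum_erase _ _ hmem] at h1
    have h2 : ∑ S ∈ (Finset.powersetCard N.card Finset.univ).erase N,
        ∏ i ∈ S, (X i : MvPolynomial (Fin n) K) ∈ P := by
      refine Ideal.sum_mem _ fun S hS => ?_
      obtain ⟨hne, hS⟩ := Finset.mem_erase.1 hS
      have hnot : ¬ S ⊆ N := fun hs =>
        hne (Finset.eq_of_subset_of_card_le hs (Finset.mem_powersetCard.1 hS).2.ge)
      obtain ⟨i, hi, hiN⟩ := Finset.not_subset.1 hnot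
      exact sqMon_mem_of_isPrime S hi (by simpa [N] using hiN)
    obtain ⟨i, hi, hiP⟩ := exists_mem_of_sqMon_mem hP ((P.add_mem_iff_left h2).1 h1)
    exact (Finset.mem_filter.1 hi).2 hiP
  rw [sqVeronese, Ideal.span_le]
  rintro _ ⟨S, hS, rfl⟩
  have hnot : ¬ S ⊆ N := fun hs =>
    absurd (Finset.card_le_card hs) (by rw [show S.card = d from hS]; omega)
  obtain ⟨i, hi, hiN⟩ := Finset.not_subset.1 hnot
  exact sqMon_mem_of_isPrime S hi (by simpa [N] using hiN)

lemma radical_span_esymm {d : ℕ} (hdn : d ≤ n) :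
    (Ideal.span (Set.range fun j : Fin (n - d + 1) => esymm (Fin n) K (d + j))).radical
      = (sqVeronese (n := n) K d).radical := by
  apply le_antisymm
  · refine Ideal.radical_mono (Ideal.span_le.2 ?_)
    rintro _ ⟨j, rfl⟩
    exact esymm_mem_sqVeronese (by omega)
  · rw [Ideal.radical_le_radical_iff, Ideal.radical_eq_sInf]
    refine le_sInf fun P hP => sqVeronese_le_of_isPrime hP.2 fun k hk hkn => ?_
    refine hP.1 (Ideal.subset_span ⟨⟨k - d, by omega⟩, ?_⟩)
    simp only
    congr 1
    omega

open Classical in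
/-- The substitution sending the variables in `A` to `0` and fixing the others. -/
noncomputable def killVars (K : Type*) [Field K] {n : ℕ} (A : Finset (Fin n)) :
    MvPolynomial (Fin n) K →ₐ[K] MvPolynomial (Fin n) K :=
  aeval fun i => if i ∈ A then 0 else X i

/-- The prime generated by the variables in `A`, encoded as the kernel of the substitution that
kills them, so that it is visibly prime. -/
noncomputable def coordPrime (K : Type*) [Field K] {n : ℕ} (A : Finset (Fin n)) :
    Ideal (MvPolynomial (Fin n) K) := RingHom.ker (killVars K A)

instance (A : Finset (Fin n)) : (coordPrime K A).IsPrime := RingHom.ker_isPrime _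

lemma X_mem_coordPrime {A : Finset (Fin n)} {i : Fin n} : X i ∈ coordPrime K A ↔ i ∈ A := by
  by_cases h : i ∈ A <;> simp [coordPrime, killVars, RingHom.mem_ker, h]

/-- `coordPrime K A` is the smallest ideal containing the variables in `A`: modulo an ideal
containing them, every polynomial agrees with its image under `killVars K A`. -/
lemma coordPrime_le {A : Finset (Fin n)} {Q : Ideal (MvPolynomial (Fin n) K)}
    (h : ∀ i ∈ A, X i ∈ Q) : coordPrime K A ≤ Q := by
  intro p hp
  have key : (Ideal.Quotient.mkₐ K Q).comp (killVars K A) = Ideal.Quotient.mkₐ K Q := by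
    ext i
    by_cases hi : i ∈ A
    · simpa [killVars, hi] using (Ideal.Quotient.eq_zero_iff_mem.2 (h i hi)).symm
    · simp [killVars, hi]
  have h1 := DFunLike.congr_fun key p
  rw [AlgHom.comp_apply, show killVars K A p = 0 from hp, map_zero] at h1
  exact Ideal.Quotient.eq_zero_iff_mem.1 h1.symm

lemma card_le_height_coordPrime (A : Finset (Fin n)) :
    (A.card : ℕ∞) ≤ (coordPrime K A).height := by
  classical
  induction A using Finset.induction_on with
  | empty => simp
  | insert a A ha ih =>
    have hlt : coordPrime K A < coordPrime K (insert a A) := by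
      refine lt_of_le_of_ne
        (coordPrime_le fun i hi => X_mem_coordPrime.2 (Finset.mem_insert_of_mem hi)) fun he => ?_
      have : (X a : MvPolynomial (Fin n) K) ∈ coordPrime K (insert a A) :=
        X_mem_coordPrime.2 (Finset.mem_insert_self a A)
      exact ha (X_mem_coordPrime.1 (he ▸ this))
    rw [Finset.card_insert_of_notMem ha]
    push_cast
    exact (add_le_add_left ih 1).trans (Ideal.height_add_one_le_of_lt_of_isPrime hlt)

lemma coordPrime_mem_minimalPrimes {d : ℕ} (hd : 1 ≤ d) (hdn : d ≤ n) {A : Finset (Fin n)}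
    (hA : A.card = n - d + 1) : coordPrime K A ∈ (sqVeronese (n := n) K d).minimalPrimes := by
  classical
  have hc : Aᶜ.card = d - 1 := by
    rw [Finset.card_compl, hA, Fintype.card_fin]; omega
  refine ⟨⟨inferInstance, ?_⟩, ?_⟩
  · rw [sqVeronese, Ideal.span_le]
    rintro _ ⟨S, hS, rfl⟩
    have hnot : ¬ S ⊆ Aᶜ := fun hs =>
      absurd (Finset.card_le_card hs) (by rw [show S.card = d from hS]; omega)
    obtain ⟨i, hi, hiA⟩ := Finset.not_subset.1 hnot
    exact sqMon_mem_of_isPrime S hi (X_mem_coordPrime.2 (by simpa using hiA))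
  · rintro Q ⟨hQ, hIQ⟩ hQA
    refine coordPrime_le fun a ha => ?_
    -- the generator supported on `{a} ∪ Aᶜ` forces `X a` into `Q`
    have hmem : sqMon K (insert a Aᶜ) ∈ Q := by
      apply hIQ
      apply sqMon_mem_sqVeronese
      rw [Finset.card_insert_of_notMem (by simpa using ha)]
      omega
    obtain ⟨i, hi, hiQ⟩ := exists_mem_of_sqMon_mem hQ hmem
    rcases Finset.mem_insert.1 hi with rfl | hi
    · exact hiQ
    · exact absurd (X_mem_coordPrime.1 (hQA hiQ)) (Finset.mem_compl.1 hi)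

lemma araIdeal_sqVeronese {d : ℕ} (hd : 1 ≤ d) (hdn : d ≤ n) :
    araIdeal (sqVeronese (n := n) K d) = n - d + 1 := by
  apply le_antisymm
  · exact Nat.sInf_le ⟨_, radical_span_esymm hdn⟩
  · refine le_csInf ⟨_, _, radical_span_esymm hdn⟩ ?_
    rintro m ⟨f, hf⟩
    obtain ⟨A, -, hA⟩ := Finset.exists_subset_card_eq
      (s := (Finset.univ : Finset (Fin n))) (n := n - d + 1) (by simp; omega)
    have hmin := coordPrime_mem_minimalPrimes (K := K) hd hdn hA
    rw [← Ideal.radical_minimalPrimes, ← hf, Ideal.radical_minimalPrimes] at hmin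
    have h1 := Ideal.height_le_card_of_mem_minimalPrimes_span (Set.finite_range f) hmin
    have h2 := (card_le_height_coordPrime (K := K) A).trans h1
    have h3 : (Set.range f).ncard ≤ m := by
      rw [← Set.image_univ]
      exact (Set.ncard_image_le Set.finite_univ).trans (by simp [Set.ncard_univ])
    have h4 : A.card ≤ (Set.range f).ncard := by exact_mod_cast h2
    omega

/-- Evaluation at the indicator vector of `T` kills the ideal generated by square-free monomials with
supports not contained in `T`, whereas a monomial supported inside `T` takes the value `1`; this
is how such monomials are shown not to lie in the ideal. -/
lemma eval_indicator_eq_zero {C : Set (Finset (Fin n))} (T : Finset (Fin n))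
    (hC : ∀ S ∈ C, ¬ S ⊆ T) {p : MvPolynomial (Fin n) K} (hp : p ∈ Ideal.span (sqMon K '' C)) :
    eval (fun i => if i ∈ T then (1 : K) else 0) p = 0 := by
  have hle : Ideal.span (sqMon K '' C) ≤
      RingHom.ker (eval (fun i => if i ∈ T then (1 : K) else 0)) := by
    rw [Ideal.span_le]
    rintro _ ⟨S, hS, rfl⟩
    obtain ⟨i, hi, hiT⟩ := Finset.not_subset.1 (hC S hS)
    rw [SetLike.mem_coe, RingHom.mem_ker, sqMon, map_prod]
    exact Finset.prod_eq_zero hi (by simp [hiT])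
  exact hle hp

variable {d s : ℕ} {u : Fin s → Finset (Fin n)} {V : Fin s → Finset (Fin n)}

lemma mem_of_X_mem_span {A : Finset (Fin n)} {i : Fin n}
    (h : (X i : MvPolynomial (Fin n) K) ∈
      Ideal.span ((fun i => (X i : MvPolynomial (Fin n) K)) '' (A : Set (Fin n)))) : i ∈ A := by
  have hle : Ideal.span ((fun i => (X i : MvPolynomial (Fin n) K)) '' (A : Set (Fin n))) ≤
      coordPrime K A := by
    rw [Ideal.span_le]
    rintro _ ⟨j, hj, rfl⟩
    exact X_mem_coordPrime.2 hj
  exact X_mem_coordPrime.1 (hle h)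

lemma mem_witness_iff (hV : LinearQuotientWitness K u V) (j : Fin s) (i : Fin n) :
    i ∈ V j ↔ X i * sqMon K (u j) ∈ Ideal.span (sqMon K '' (u '' {k | k < j})) := by
  rw [← Ideal.mem_colon_span_singleton, hV j]
  exact ⟨fun h => Ideal.subset_span ⟨i, h, rfl⟩, mem_of_X_mem_span⟩

lemma disjoint_of_witness (hu : Function.Injective u) (hcard : ∀ j, (u j).card = d)
    (hV : LinearQuotientWitness K u V) (j : Fin s) : V j ⊆ (u j)ᶜ := by
  intro i hi
  rw [Finset.mem_compl]
  intro hij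
  have h := eval_indicator_eq_zero (u j) (fun S hS => ?_) ((mem_witness_iff hV j i).1 hi)
  · rw [map_mul, eval_X, if_pos hij, one_mul, sqMon, map_prod,
      Finset.prod_eq_one (fun x hx => by simp [hx])] at h
    exact one_ne_zero h
  · obtain ⟨k, hk, rfl⟩ := hS
    intro hs
    have := hu (Finset.eq_of_subset_of_card_le hs (by rw [hcard, hcard]))
    exact absurd hk (by simp [this])

/-- For the last index `j`, the `j`-th colon ideal contains every variable outside `u j`; when there
is such a variable, `j` is not the first index. -/
lemma mem_of_witness_last (hd : 1 ≤ d) (huB : Set.range u = {S : Finset (Fin n) | S.card = d})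
    (hV : LinearQuotientWitness K u V) {j : Fin s} (hj : ∀ k, k ≤ j) {i : Fin n} (hi : i ∉ u j) :
    i ∈ V j ∧ (j : ℕ) ≠ 0 := by
  have hcard : (u j).card = d := by
    have : u j ∈ Set.range u := ⟨j, rfl⟩
    rwa [huB] at this
  obtain ⟨a, ha⟩ := Finset.card_pos.1 (by omega : 0 < (u j).card)
  have hi' : i ∉ (u j).erase a := fun h => hi (Finset.mem_of_mem_erase h)
  obtain ⟨k, hk⟩ : insert i ((u j).erase a) ∈ Set.range u := by
    rw [huB, Set.mem_ofPred_eq, Finset.card_insert_of_notMem hi', Finset.card_erase_of_mem ha]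
    omega
  have hkj : k < j := by
    refine lt_of_le_of_ne (hj k) ?_
    rintro rfl
    exact hi (hk ▸ Finset.mem_insert_self _ _)
  refine ⟨(mem_witness_iff hV j i).2 ?_, by have : (k : ℕ) < j := hkj; omega⟩
  have : X i * sqMon K (u j) = X a * sqMon K (u k) := by
    rw [hk, sqMon, sqMon, Finset.prod_insert hi', ← Finset.mul_prod_erase _ _ ha]
    ring
  rw [this]
  exact Ideal.mul_mem_left _ _ (Ideal.subset_span ⟨_, ⟨k, hkj, rfl⟩, rfl⟩)

lemma lqIndex_eq (hd : 1 ≤ d) (hdn : d ≤ n) (hu : Function.Injective u)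
    (huB : Set.range u = {S : Finset (Fin n) | S.card = d})
    (hV : LinearQuotientWitness K u V) : lqIndex V = n - d := by
  have hcard : ∀ j, (u j).card = d := fun j => by
    have : u j ∈ Set.range u := ⟨j, rfl⟩
    rwa [huB] at this
  have hcompl : ∀ j, (u j)ᶜ.card = n - d := fun j => by
    rw [Finset.card_compl, hcard, Fintype.card_fin]
  apply le_antisymm
  · exact Finset.sup_le fun j _ =>
      (Finset.card_le_card (disjoint_of_witness hu hcard hV j)).trans (hcompl j).le
  · rcases Nat.eq_zero_or_pos (n - d) with h0 | h0
    · omega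
    obtain ⟨T, -, hT⟩ := Finset.exists_subset_card_eq
      (s := (Finset.univ : Finset (Fin n))) (n := d) (by simpa using hdn)
    obtain ⟨t, -⟩ : T ∈ Set.range u := by rw [huB]; exact hT
    have hs : 0 < s := t.pos
    let j : Fin s := ⟨s - 1, by omega⟩
    have hj : ∀ k, k ≤ j := fun k => by
      have := k.isLt
      rw [Fin.le_def]
      change (k : ℕ) ≤ s - 1
      omega
    obtain ⟨i, hi⟩ := Finset.card_pos.1 (by rw [hcompl j]; exact h0)
    have hj0 := (mem_of_witness_last hd huB hV hj (Finset.mem_compl.1 hi)).2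
    have hle : (u j)ᶜ ⊆ V j := fun x hx =>
      (mem_of_witness_last hd huB hV hj (Finset.mem_compl.1 hx)).1
    calc n - d = (u j)ᶜ.card := (hcompl j).symm
      _ ≤ (V j).card := Finset.card_le_card hle
      _ ≤ lqIndex V :=
        Finset.le_sup (f := fun j => (V j).card) (Finset.mem_filter.2 ⟨Finset.mem_univ _, hj0⟩)

end Veronese

/-- Let `I` be the square-free Veronese ideal of degree `d` in the
variables `x_1, …, x_n` (so `G(I)` consists of all square-free monomials of degree `d`,
listed by a linear quotient ordering `u` with index `q(I)`).  Then
`ara I = q(I) + 1 = n − d + 1`. -/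
theorem statement15 {K : Type*} [Field K] {n d s : ℕ} (hd : 1 ≤ d) (hdn : d ≤ n)
    {I : Ideal (MvPolynomial (Fin n) K)} (hI : I = sqVeronese K d)
    (u : Fin s → Finset (Fin n)) (hu : Function.Injective u)
    (huB : Set.range u = {S : Finset (Fin n) | S.card = d})
    (V : Fin s → Finset (Fin n)) (hV : LinearQuotientWitness K u V) :
    araIdeal I = lqIndex V + 1 ∧ lqIndex V + 1 = n - d + 1 := by
  subst hI
  rw [araIdeal_sqVeronese hd hdn, lqIndex_eq hd hdn hu huB hV]
  exact ⟨rfl, rfl⟩
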